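/- arXiv:1903.07792 — 2 statements merged into one kernel-verified Lean document; each statement's English description precedes it below -/
import Mathlib

section
/- Let ε > 0 and 0 < δ < 2, and set α := ε²/(ε + 2·log(2/δ)). Then 2·exp( −(ε − α/2)²/(2α) ) ≤ δ. -/
/-- Final verification in the proof of Theorem 1: with the choice
`α = ε²/(ε + 2 log(2/δ))`, the tail bound `2 exp(−(ε − α/2)²/(2α))` is at most `δ`. -/
theorem tail_bound_at_alpha_choice (ε δ : ℝ) (hε : 0 < ε) (hδ0 : 0 < δ) (hδ2 : δ < 2)
    (α : ℝ) (hα : α = ε ^ 2 / (ε + 2 * Real.log (2 / δ))) :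
    2 * Real.exp (-(ε - α / 2) ^ 2 / (2 * α)) ≤ δ := by
  have hL : 0 < Real.log (2 / δ) := Real.log_pos (by rw [lt_div_iff₀ hδ0]; linarith)
  have hexp : Real.exp (-Real.log (2 / δ)) = δ / 2 := by
    rw [Real.exp_neg, Real.exp_log (by positivity), inv_div]
  generalize Real.log (2 / δ) = L at *
  have hα0 : 0 < α := by rw [hα]; positivity
  have hmul : α * (ε + 2 * L) = ε ^ 2 := by
    rw [hα]; exact div_mul_cancel₀ _ (by positivity)
  have hle : -(ε - α / 2) ^ 2 / (2 * α) ≤ -L := by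
    rw [div_le_iff₀ (by positivity)]
    nlinarith [sq_nonneg α]
  have := Real.exp_le_exp.mpr hle
  linarith
end

section
/- Let ε > 0 and 0 < δ < 2, and write L := log(2/δ) > 0. Then for every α with 0 < α ≤ 2ε + 4L − 2·√( (ε + 2L)² − ε² ), one has 2·exp( −(ε − α/2)²/(2α) ) ≤ δ. -/
/-- The range claim (*) in the proof of Theorem 1: the tail bound
`2 exp(−(ε − α/2)²/(2α)) ≤ δ` holds for every
`α ∈ (0, 2ε + 4L − 2√((ε + 2L)² − ε²)]`, where `L = log(2/δ)`. -/
theorem tail_bound_range (ε δ : ℝ) (hε : 0 < ε) (hδ0 : 0 < δ) (hδ2 : δ < 2)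
    (L : ℝ) (hL : L = Real.log (2 / δ))
    (α : ℝ) (hα0 : 0 < α)
    (hα : α ≤ 2 * ε + 4 * L - 2 * Real.sqrt ((ε + 2 * L) ^ 2 - ε ^ 2)) :
    2 * Real.exp (-(ε - α / 2) ^ 2 / (2 * α)) ≤ δ := by
  have hLpos : 0 < L := by
    rw [hL]
    exact Real.log_pos (by rw [lt_div_iff₀ hδ0]; linarith)
  have hnn : 0 ≤ (ε + 2 * L) ^ 2 - ε ^ 2 := by nlinarith [mul_pos hε hLpos]
  have hs0 := Real.sqrt_nonneg ((ε + 2 * L) ^ 2 - ε ^ 2)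
  have hs := Real.sq_sqrt hnn
  have hle : Real.sqrt ((ε + 2 * L) ^ 2 - ε ^ 2) ≤ ε + 2 * L - α / 2 := by linarith
  have hsq := pow_le_pow_left₀ hs0 hle 2
  have hkey : -(ε - α / 2) ^ 2 / (2 * α) ≤ -L := by
    rw [div_le_iff₀ (by positivity)]
    nlinarith
  have hexp : Real.exp (-L) = δ / 2 := by
    rw [Real.exp_neg, hL, Real.exp_log (by positivity), inv_div]
  have := Real.exp_le_exp.mpr hkey
  linarith
end
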